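/- Fix t ≥ 1 and define the substitution H on the alphabet Ξ by H(ξ_i) = Z_t ξ_{i+t+1} Z_t ξ_{t+1}, extended letterwise to words over Ξ. Then for every r ≥ 1 the word H(Z_r) is a factor of the Zimin word Z_{r+t+1}. -/

import Mathlib

/-- The Zimin words over the alphabet `Ξ = {ξ_1, ξ_2, ...}` (the letter `ξ_i`
is encoded by `i : ℕ`): `Z_1 = ξ_1`, `Z_{n+1} = Z_n ξ_{n+1} Z_n`
(with the convention `Z_0` empty). -/
def Zimin : ℕ → List ℕ
  | 0 => []
  | n + 1 => Zimin n ++ [n + 1] ++ Zimin n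

/-- `Z_{r+t+1} = Z_t ξ_{t+1} H(Z_r) Z_t`. -/
theorem zimin_add_eq (t r : ℕ) :
    Zimin (r + t + 1) = Zimin t ++ [t + 1] ++
      (Zimin r).flatMap (fun i => Zimin t ++ [i + t + 1] ++ Zimin t ++ [t + 1]) ++ Zimin t := by
  induction r with
  | zero => simp [Zimin]
  | succ r ih =>
    have h : Zimin (r + 1 + t + 1) =
        Zimin (r + t + 1) ++ [r + 1 + t + 1] ++ Zimin (r + t + 1) := by
      rw [show r + 1 + t + 1 = (r + t + 1) + 1 by omega, Zimin]
    rw [h, ih, Zimin]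
    simp only [List.flatMap_append, List.flatMap_singleton, List.append_assoc]

/-- Fix `t ≥ 1` and let `H` be the substitution on `Ξ` defined by
`H(ξ_i) = Z_t ξ_{i+t+1} Z_t ξ_{t+1}`, extended letterwise. Then for every
`r ≥ 1` the word `H(Z_r)` is a factor of the Zimin word `Z_{r+t+1}`. -/
theorem H_of_zimin_is_factor (t : ℕ) (ht : 1 ≤ t) (r : ℕ) (hr : 1 ≤ r) :
    ((Zimin r).flatMap (fun i => Zimin t ++ [i + t + 1] ++ Zimin t ++ [t + 1]))
      <:+: Zimin (r + t + 1) := by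
  exact ⟨Zimin t ++ [t + 1], Zimin t, (zimin_add_eq t r).symm⟩
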